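/- Let H be a Hopf algebra over a field k with bijective antipode S, and suppose r ∈ H satisfies the 1-dimensional partial comodule equations. Set e := S⁻¹(r)·r, let A be the smallest right coideal subalgebra of H containing e, and let π : H → H/(H·A⁺) be the canonical k-linear quotient map. Then: (a) r·e = r (so r ∈ H·e); (b) the set {h·e : h ∈ H and π(h_{(1)}) ⊗ h_{(2)}·e = π(r) ⊗ h·e in (H/(H·A⁺)) ⊗ H} equals the line k·r spanned by r; (c) r_{(1)}·e ⊗ r_{(2)} = r ⊗ r in H ⊗ H. (This identifies every 1-dimensional partial H-comodule with the cotensor product W □ He of the construction, whose underlying space is k·r and whose partial coaction sends r to r ⊗ r.) -/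

import Mathlib

open TensorProduct

/-- The five 1-dimensional partial comodule equations for an element `r` of a Hopf
algebra `H`: `ε(r) = 1`; `r ⊗ r·S(r) = r₍₁₎ ⊗ r₍₂₎·S(r)`; `r·S(r₍₁₎) ⊗ r₍₂₎ = r·S(r) ⊗ r`;
`r ⊗ S(r)·r = r₍₁₎ ⊗ S(r₍₂₎)·r`; `S(r)·r ⊗ r = S(r)·r₍₁₎ ⊗ r₍₂₎`. -/
def OneDimPCM (k : Type*) {H : Type*} [Field k] [Ring H] [HopfAlgebra k H] (r : H) : Prop :=
  Coalgebra.counit (R := k) r = 1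
  ∧ r ⊗ₜ[k] (r * HopfAlgebra.antipode (R := k) r)
      = Coalgebra.comul (R := k) r * ((1 : H) ⊗ₜ[k] HopfAlgebra.antipode (R := k) r)
  ∧ (r ⊗ₜ[k] (1 : H)) *
        (LinearMap.rTensor H (HopfAlgebra.antipode (R := k)) (Coalgebra.comul (R := k) r))
      = (r * HopfAlgebra.antipode (R := k) r) ⊗ₜ[k] r
  ∧ r ⊗ₜ[k] (HopfAlgebra.antipode (R := k) r * r)
      = (LinearMap.lTensor H (HopfAlgebra.antipode (R := k)) (Coalgebra.comul (R := k) r))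
          * ((1 : H) ⊗ₜ[k] r)
  ∧ (HopfAlgebra.antipode (R := k) r * r) ⊗ₜ[k] r
      = ((HopfAlgebra.antipode (R := k) r) ⊗ₜ[k] (1 : H)) * Coalgebra.comul (R := k) r

open Coalgebra HopfAlgebra in
theorem antipode_comul_aux {k H : Type*} [Field k] [Ring H] [HopfAlgebra k H] (a : H) :
    comul (R := k) (antipode k a) =
      TensorProduct.comm k H H (TensorProduct.map (antipode k) (antipode k) (comul (R := k) a)) := by
  let F : H →ₗ[k] H ⊗[k] H := comul ∘ₗ antipode k
  let G : H →ₗ[k] H ⊗[k] H :=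
    (TensorProduct.comm k H H).toLinearMap ∘ₗ TensorProduct.map (antipode k) (antipode k) ∘ₗ comul
  have h1 : WithConv.toConv F * WithConv.toConv (comul (R := k) (A := H)) = 1 := by
    ext x
    rw [(ℛ k x).convMul_apply]
    have := congrArg (comul (R := k)) (sum_antipode_mul_eq_algebraMap_counit (ℛ k x))
    simp only [map_sum, Bialgebra.comul_mul, Bialgebra.comul_algebraMap] at this
    simpa [F] using this
  let M : H → H ⊗[k] (H ⊗[k] H) →ₗ[k] H ⊗[k] H := fun x =>
    TensorProduct.map (LinearMap.mulLeft k x ∘ₗ antipode k)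
      (LinearMap.mul' k H ∘ₗ LinearMap.lTensor H (antipode k)) ∘ₗ
      (TensorProduct.comm k (H ⊗[k] H) H).toLinearMap ∘ₗ
      (TensorProduct.assoc k H H H).symm.toLinearMap
  have key : ∀ (x c : H), M x (LinearMap.lTensor H comul (comul (R := k) c))
      = (x * antipode k c) ⊗ₜ[k] (1 : H) := by
    intro x c
    rw [← coassoc_apply]
    have gen : ∀ t : H ⊗[k] H, M x (TensorProduct.assoc k H H H (LinearMap.rTensor H comul t))
        = TensorProduct.map (LinearMap.mulLeft k x ∘ₗ antipode k) (Algebra.linearMap k H)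
          (TensorProduct.comm k k H (LinearMap.rTensor H counit t)) := by
      intro t
      induction t with
      | zero => simp
      | add x y hx hy => simp only [map_add, hx, hy]
      | tmul y w => simp [M]
    rw [gen, rTensor_counit_comul]
    simp
  let L : H ⊗[k] (H ⊗[k] (H ⊗[k] H)) →ₗ[k] H ⊗[k] H :=
    TensorProduct.lift
      { toFun := fun x => M x
        map_add' := by
          intro x y; ext; simp [M, add_mul, TensorProduct.add_tmul]
        map_smul' := by
          intro x y; ext; simp [M, TensorProduct.smul_tmul'] }
  let N : H ⊗[k] (H ⊗[k] H) →ₗ[k] H ⊗[k] H :=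
    L ∘ₗ LinearMap.lTensor H (LinearMap.lTensor H comul)
  have h2 : WithConv.toConv (comul (R := k) (A := H)) * WithConv.toConv G = 1 := by
    ext x
    have gen1 : ∀ t : H ⊗[k] H, LinearMap.mul' k (H ⊗[k] H) (TensorProduct.map comul G t)
        = N (TensorProduct.assoc k H H H (LinearMap.rTensor H comul t)) := by
      intro t
      induction t with
      | zero => simp
      | add x y hx hy => simp only [map_add, hx, hy]
      | tmul a b =>
        have : ∀ u v : H ⊗[k] H, u * TensorProduct.comm k H H
            (TensorProduct.map (antipode k) (antipode k) v) =
            L (TensorProduct.assoc k H H (H ⊗[k] H) (u ⊗ₜ[k] v)) := by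
          intro u v
          induction u with
          | zero => simp
          | add x y hx hy => simp only [map_add, add_mul, TensorProduct.add_tmul, hx, hy]
          | tmul x y =>
            induction v with
            | zero => simp
            | add x y hx hy => simp only [map_add, mul_add, TensorProduct.tmul_add, hx, hy]
            | tmul z w => simp [L, M]
        have h8 : ∀ u : H ⊗[k] H, L (TensorProduct.assoc k H H (H ⊗[k] H) (u ⊗ₜ[k] comul b))
            = N (TensorProduct.assoc k H H H (u ⊗ₜ[k] b)) := by
          intro u
          induction u with
          | zero => simp
          | add x y hx hy => simp only [map_add, TensorProduct.add_tmul, hx, hy]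
          | tmul x y => simp [L, N]
        simpa [G, h8] using this (comul a) (comul b)
    have gen2 : ∀ t : H ⊗[k] H, N (LinearMap.lTensor H comul t) =
        (LinearMap.mul' k H (LinearMap.lTensor H (antipode k) t)) ⊗ₜ[k] (1 : H) := by
      intro t
      induction t with
      | zero => simp
      | add x y hx hy => simp only [map_add, hx, hy, TensorProduct.add_tmul]
      | tmul a b => simpa [N, L] using key a b
    change LinearMap.mul' k (H ⊗[k] H) (TensorProduct.map comul G (comul x)) = _
    rw [gen1, coassoc_apply, gen2, mul_antipode_lTensor_comul_apply]
    simp [Algebra.TensorProduct.algebraMap_apply]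
  have h3 := left_inv_eq_right_inv h1 h2
  exact LinearMap.congr_fun (congrArg WithConv.ofConv h3) a

section
open Coalgebra HopfAlgebra
/-- let `H` have bijective antipode, let `r ∈ H` satisfy the 1-dimensional
partial comodule equations, set `e := S⁻¹(r)·r`, let `A` be the smallest right coideal
subalgebra containing `e` and `π : H → H/(H·A⁺)` the quotient map. Then (a) `r·e = r`;
(b) `{h·e : π(h₍₁₎) ⊗ h₍₂₎·e = π(r) ⊗ h·e}` is exactly the line `k·r`; and
(c) `r₍₁₎·e ⊗ r₍₂₎ = r ⊗ r`. -/
theorem stmt15 (k H : Type*) [Field k] [Ring H] [HopfAlgebra k H]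
    (hS : Function.Bijective (HopfAlgebra.antipode (R := k) (A := H)))
    (r : H) (hr : OneDimPCM k r)
    (r' : H) (hr' : HopfAlgebra.antipode (R := k) r' = r)
    (e : H) (he : e = r' * r)
    (A : Subalgebra k H)
    (hA : ∀ a ∈ A, Coalgebra.comul (R := k) a ∈
      Submodule.span k {x : H ⊗[k] H | ∃ b ∈ A, ∃ h : H, x = b ⊗ₜ[k] h})
    (heA : e ∈ A)
    (hmin : ∀ A' : Subalgebra k H,
      (∀ a ∈ A', Coalgebra.comul (R := k) a ∈
        Submodule.span k {x : H ⊗[k] H | ∃ b ∈ A', ∃ h : H, x = b ⊗ₜ[k] h}) →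
      e ∈ A' → A ≤ A')
    (B : Submodule k H)
    (hB : B = Submodule.span k {x : H | ∃ (h : H) (a : H), a ∈ A
      ∧ Coalgebra.counit (R := k) a = 0 ∧ x = h * a}) :
    -- (a)
    r * e = r
    -- (b)
    ∧ {x : H | ∃ h : H, x = h * e ∧
        TensorProduct.map B.mkQ LinearMap.id
            (Coalgebra.comul (R := k) h * ((1 : H) ⊗ₜ[k] e))
          = B.mkQ r ⊗ₜ[k] (h * e)}
      = Set.range (fun c : k => c • r)
    -- (c)
    ∧ Coalgebra.comul (R := k) r * (e ⊗ₜ[k] (1 : H)) = r ⊗ₜ[k] r := by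
  classical
  obtain ⟨h1, h2, h3, h4, h5⟩ := hr
  let σ := LinearEquiv.ofBijective (HopfAlgebra.antipode k (A := H)) hS
  let s : H →ₗ[k] H := σ.symm.toLinearMap
  have sS : ∀ x, s (antipode k x) = x := fun x => σ.symm_apply_apply x
  have Ss : ∀ x, antipode k (s x) = x := fun x => σ.apply_symm_apply x
  have smul : ∀ x y, s (x * y) = s y * s x := by
    intro x y
    apply hS.1
    rw [antipode_mul_antidistrib, Ss, Ss, Ss]
  have sr : s r = r' := by rw [← hr', sS]
  have h3' : comul (R := k) r * (r' ⊗ₜ[k] (1 : H)) = (r * r') ⊗ₜ[k] r := by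
    have gen : ∀ t : H ⊗[k] H, TensorProduct.map s LinearMap.id
        ((r ⊗ₜ[k] (1 : H)) * LinearMap.rTensor H (antipode k) t) = t * (r' ⊗ₜ[k] (1 : H)) := by
      intro t
      induction t with
      | zero => simp
      | tmul x y => simp [smul, sS, sr]
      | add x y hx hy => simp only [map_add, mul_add, add_mul, hx, hy]
    rw [← gen, h3]; simp [smul, sS, sr]
  have h4' : ((1 : H) ⊗ₜ[k] r') * comul (R := k) r = r ⊗ₜ[k] (r' * r) := by
    have gen : ∀ t : H ⊗[k] H, TensorProduct.map LinearMap.id s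
        ((LinearMap.lTensor H (antipode k) t) * ((1 : H) ⊗ₜ[k] r)) = ((1 : H) ⊗ₜ[k] r') * t := by
      intro t
      induction t with
      | zero => simp
      | tmul x y => simp [smul, sS, sr]
      | add x y hx hy => simp only [map_add, mul_add, add_mul, hx, hy]
    rw [← gen, ← h4]; simp [smul, sS, sr]
  have hΔ : comul (R := k) r' = TensorProduct.map s s (TensorProduct.comm k H H (comul (R := k) r)) := by
    have gen : ∀ t : H ⊗[k] H, TensorProduct.map s s (TensorProduct.comm k H H
        (TensorProduct.comm k H H (TensorProduct.map (antipode k) (antipode k) t))) = t := by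
      intro t
      induction t with
      | zero => simp
      | tmul x y => simp [sS]
      | add x y hx hy => simp only [map_add, hx, hy]
    rw [← hr', antipode_comul_aux, gen]
  have h2' : (r ⊗ₜ[k] (1 : H)) * comul (R := k) r' = (r * r') ⊗ₜ[k] r' := by
    have gen : ∀ t : H ⊗[k] H, TensorProduct.map s s (TensorProduct.comm k H H
        (t * ((1 : H) ⊗ₜ[k] antipode k r))) = (r ⊗ₜ[k] (1 : H)) *
          TensorProduct.map s s (TensorProduct.comm k H H t) := by
      intro t
      induction t with
      | zero => simp
      | tmul x y => simp [smul, sS]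
      | add x y hx hy => simp only [map_add, mul_add, add_mul, hx, hy]
    rw [hΔ, ← gen, ← h2]; simp [smul, sS, sr]
  have q1 : r * antipode k r * r = r := by
    have gen : ∀ t : H ⊗[k] H, LinearMap.mul' k H ((r ⊗ₜ[k] (1 : H)) * t)
        = r * LinearMap.mul' k H t := by
      intro t
      induction t with
      | zero => simp
      | tmul x y => simp [mul_assoc]
      | add x y hx hy => simp only [map_add, mul_add, hx, hy]
    have := congrArg (LinearMap.mul' k H) h3
    rw [gen, mul_antipode_rTensor_comul_apply, h1] at this
    simpa using this.symm
  have q2 : antipode k r * r * antipode k r = antipode k r := by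
    have gen : ∀ t : H ⊗[k] H, LinearMap.mul' k H (LinearMap.rTensor H (antipode k)
        (t * ((1 : H) ⊗ₜ[k] antipode k r)))
        = LinearMap.mul' k H (LinearMap.rTensor H (antipode k) t) * antipode k r := by
      intro t
      induction t with
      | zero => simp
      | tmul x y => simp [mul_assoc]
      | add x y hx hy => simp only [map_add, add_mul, hx, hy]
    have := congrArg (fun t => LinearMap.mul' k H (LinearMap.rTensor H (antipode k) t)) h2
    rw [gen, mul_antipode_rTensor_comul_apply, h1] at this
    simpa [mul_assoc] using this
  have q3 : r * r' * r = r := by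
    apply hS.1
    rw [antipode_mul_antidistrib, antipode_mul_antidistrib, hr', ← mul_assoc, q2]
  have q4 : r' * r * r' = r' := by
    apply hS.1
    rw [antipode_mul_antidistrib, antipode_mul_antidistrib, hr', ← mul_assoc, q1]
  have q5 : r' * s r' * r' = r' := by
    apply hS.1
    rw [antipode_mul_antidistrib, antipode_mul_antidistrib, hr', Ss, ← mul_assoc, q3]
  have see : s e * e = e := by
    rw [he, smul, sr]
    calc r' * s r' * (r' * r) = (r' * s r' * r') * r := by simp only [mul_assoc]
      _ = _ := by rw [q5]
  have re : r * e = r := by rw [he, ← mul_assoc, q3]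
  have εe : counit (R := k) e = 1 := by
    have : counit (R := k) r' = 1 := by rw [← counit_antipode, hr', h1]
    rw [he, Bialgebra.counit_mul, this, h1, one_mul]
  have hc : comul (R := k) r * (e ⊗ₜ[k] (1 : H)) = r ⊗ₜ[k] r := by
    have : e ⊗ₜ[k] (1 : H) = (r' ⊗ₜ[k] (1 : H)) * (r ⊗ₜ[k] (1 : H)) := by simp [he]
    rw [this, ← mul_assoc, h3']; simp [q3]
  have hee : (e ⊗ₜ[k] (1 : H)) * comul (R := k) e = e ⊗ₜ[k] e := by
    have : e ⊗ₜ[k] (1 : H) = (r' ⊗ₜ[k] (1 : H)) * (r ⊗ₜ[k] (1 : H)) := by simp [he]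
    have e2 : (r' ⊗ₜ[k] (1 : H)) * ((r * r') ⊗ₜ[k] r')
      = (r' ⊗ₜ[k] (1 : H)) * ((1 : H) ⊗ₜ[k] r') := by simp [← mul_assoc, q4]
    rw [this]
    conv_lhs => rw [he]
    rw [Bialgebra.comul_mul, mul_assoc, ← mul_assoc (r ⊗ₜ[k] (1 : H)), h2', ← mul_assoc, e2,
      mul_assoc, h4']
    simp [he]
  let A' : Subalgebra k H :=
    { carrier := {a | (e ⊗ₜ[k] (1 : H)) * comul (R := k) a = e ⊗ₜ[k] a}
      mul_mem' := by
        intro a b ha hb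
        simp only [Set.mem_ofPred_eq] at ha hb ⊢
        have : e ⊗ₜ[k] a = ((1 : H) ⊗ₜ[k] a) * (e ⊗ₜ[k] (1 : H)) := by simp
        rw [Bialgebra.comul_mul, ← mul_assoc, ha, this, mul_assoc, hb]
        simp
      add_mem' := by
        intro a b ha hb
        simp only [Set.mem_ofPred_eq] at ha hb ⊢
        rw [map_add, mul_add, ha, hb, TensorProduct.tmul_add]
      algebraMap_mem' := by
        intro c
        simp only [Set.mem_ofPred_eq]
        rw [Bialgebra.comul_algebraMap, ← Algebra.commutes, ← Algebra.smul_def,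
          Algebra.algebraMap_eq_smul_one, TensorProduct.tmul_smul] }
  have hAA' : A ≤ A' := by
    apply hmin _ _ hee
    intro a ha
    have ha : (e ⊗ₜ[k] (1 : H)) * comul (R := k) a = e ⊗ₜ[k] a := ha
    let T : H →ₗ[k] H ⊗[k] H :=
      LinearMap.mulLeft k (e ⊗ₜ[k] (1 : H)) ∘ₗ comul - TensorProduct.mk k H H e
    have hT : ∀ x, T x = 0 → x ∈ A' := fun x hx => sub_eq_zero.1 hx
    have hz : LinearMap.rTensor H T (comul (R := k) a) = 0 := by
      have gen1 : ∀ t : H ⊗[k] H, TensorProduct.assoc k H H H (LinearMap.rTensor H T t) =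
          (e ⊗ₜ[k] (1 : H ⊗[k] H)) * TensorProduct.assoc k H H H
            (LinearMap.rTensor H comul t) - e ⊗ₜ[k] t := by
        intro t
        induction t with
        | zero => simp
        | add x y hx hy =>
          simp only [map_add, mul_add, hx, hy, TensorProduct.tmul_add]; abel
        | tmul x y =>
          have : ∀ u : H ⊗[k] H, TensorProduct.assoc k H H H
              (((e ⊗ₜ[k] (1 : H)) * u) ⊗ₜ[k] y) = (e ⊗ₜ[k] (1 : H ⊗[k] H)) *
              TensorProduct.assoc k H H H (u ⊗ₜ[k] y) := by
            intro u
            induction u with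
            | zero => simp
            | add x y hx hy =>
              simp only [map_add, mul_add, hx, hy, TensorProduct.add_tmul]
            | tmul x y => simp
          simp [T, TensorProduct.sub_tmul, this]
      have gen2 : ∀ t : H ⊗[k] H, (e ⊗ₜ[k] (1 : H ⊗[k] H)) * LinearMap.lTensor H comul t
          = LinearMap.lTensor H (comul (R := k)) ((e ⊗ₜ[k] (1 : H)) * t) := by
        intro t
        induction t with
        | zero => simp
        | add x y hx hy => simp only [map_add, mul_add, hx, hy]
        | tmul x y => simp
      apply (TensorProduct.assoc k H H H).injective
      rw [gen1, coassoc_apply, gen2, ha]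
      simp
    have hex : Function.Exact (LinearMap.rTensor H (LinearMap.ker T).subtype)
        (LinearMap.rTensor H T) :=
      Module.Flat.rTensor_exact H (LinearMap.exact_subtype_ker_map T)
    obtain ⟨w, hw⟩ := (hex _).1 hz
    rw [← hw]
    clear hw
    induction w with
    | zero => simp
    | add x y hx hy => rw [map_add]; exact Submodule.add_mem _ hx hy
    | tmul x y =>
      exact Submodule.subset_span ⟨x, hT _ x.2, y, by simp⟩
  have hae : ∀ a ∈ A, a * e = counit (R := k) a • e := by
    intro a ha
    have ha : (e ⊗ₜ[k] (1 : H)) * comul (R := k) a = e ⊗ₜ[k] a := hAA' ha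
    have gen : ∀ t : H ⊗[k] H, LinearMap.mul' k H (LinearMap.lTensor H (antipode k)
        ((e ⊗ₜ[k] (1 : H)) * t))
        = e * LinearMap.mul' k H (LinearMap.lTensor H (antipode k) t) := by
      intro t
      induction t with
      | zero => simp
      | tmul x y => simp [mul_assoc]
      | add x y hx hy => simp only [map_add, mul_add, hx, hy]
    have h := gen (comul a)
    rw [ha, mul_antipode_lTensor_comul_apply, ← Algebra.commutes, ← Algebra.smul_def] at h
    have h' : e * antipode k a = counit (R := k) a • e := by simpa using h
    have h'' : a * s e = counit (R := k) a • s e := by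
      apply hS.1
      rw [antipode_mul_antidistrib, Ss, map_smul, Ss, h']
    calc a * e = a * s e * e := by rw [mul_assoc, see]
      _ = _ := by rw [h'', smul_mul_assoc, see]
  have hBe : ∀ b ∈ B, b * e = 0 := by
    intro b hb
    have : B ≤ LinearMap.ker (LinearMap.mulRight k e) := by
      rw [hB, Submodule.span_le]
      rintro x ⟨h, a, ha, hε, rfl⟩
      simp [mul_assoc, hae a ha, hε]
    simpa using this hb
  have hπe : ∀ x, B.mkQ (x * e) = B.mkQ x := by
    intro x
    rw [← sub_eq_zero, ← map_sub, Submodule.mkQ_apply, Submodule.Quotient.mk_eq_zero, hB]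
    refine Submodule.subset_span ⟨x, e - 1, A.sub_mem heA A.one_mem, by simp [εe], ?_⟩
    rw [mul_sub, mul_one]
  refine ⟨re, ?_, hc⟩
  ext x
  constructor
  · rintro ⟨h, rfl, hh⟩
    refine ⟨counit (R := k) h, ?_⟩
    have gen : ∀ t : H ⊗[k] H, TensorProduct.rid k _ (TensorProduct.map LinearMap.id
        (counit (R := k)) (TensorProduct.map B.mkQ LinearMap.id (t * ((1 : H) ⊗ₜ[k] e))))
        = B.mkQ (TensorProduct.rid k H (LinearMap.lTensor H counit t)) := by
      intro t
      induction t with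
      | zero => simp
      | tmul x y => simp [εe]
      | add x y hx hy => simp only [map_add, add_mul, hx, hy]
    have h6 := gen (comul h)
    rw [hh, lTensor_counit_comul] at h6
    simp only [TensorProduct.map_tmul, LinearMap.id_coe, id_eq, TensorProduct.rid_tmul,
      Bialgebra.counit_mul, εe, mul_one, one_smul] at h6
    rw [← map_smul, ← sub_eq_zero, ← map_sub, Submodule.mkQ_apply,
      Submodule.Quotient.mk_eq_zero] at h6
    have h7 := hBe _ h6
    rw [sub_mul, smul_mul_assoc, re] at h7
    exact sub_eq_zero.1 h7
  · rintro ⟨c, rfl⟩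
    refine ⟨c • r, by rw [smul_mul_assoc, re], ?_⟩
    have gen : ∀ t : H ⊗[k] H, TensorProduct.map B.mkQ LinearMap.id (t * ((1 : H) ⊗ₜ[k] e))
        = TensorProduct.map B.mkQ (LinearMap.mulRight k e) (t * (e ⊗ₜ[k] (1 : H))) := by
      intro t
      induction t with
      | zero => simp
      | tmul x y =>
        simp only [Algebra.TensorProduct.tmul_mul_tmul, TensorProduct.map_tmul, hπe]
        simp
      | add x y hx hy => simp only [map_add, add_mul, hx, hy]
    rw [gen, map_smul, smul_mul_assoc, hc]
    simp [re]

end
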